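/- Fix d > 2 and c₀ > 0. There exists a constant C > 0, depending only on d and c₀, with the following property. Let V be a countable set with symmetric conductances c : V × V → [0,∞) (c(x,y) = c(y,x), c(x,x) = 0) such that π(x) := ∑_y c(x,y) satisfies 0 < π(x) < ∞ for every x, and the graph with an edge between x and y whenever c(x,y) > 0 is connected; let p(x,y) := c(x,y)/π(x) be the associated reversible random walk, p_n its n-step kernels, G(u,v) := ∑_{n=0}^{∞} p_n(u,v) its Green's function, and dist the graph distance. Define the expansion profile Φ(u) := inf{ (∑_{s ∈ S, a ∉ S} c(s,a)) / π(S) : S ⊆ V finite, 0 < π(S) ≤ u } (with inf ∅ = ∞), where π(S) = ∑_{s∈S} π(s). If Φ(u) ≥ c₀·u^{−1/d} for all u > 0, then for all vertices u ≠ v: G(u,v)/π(v) ≤ C·(dist(u,v))^{−(d−2)/2}. -/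

import Mathlib

open scoped ENNReal

/-- The `n`-step kernels of a transition kernel `p` on a countable state space:
`p₀(x,y) = δ_{x=y}` and `p_{n+1}(x,y) = ∑_z p(x,z) pₙ(z,y)`. -/
noncomputable def kernelIter {V : Type*} [DecidableEq V] (p : V → V → ℝ) :
    ℕ → V → V → ℝ
  | 0 => fun x y => if x = y then 1 else 0
  | n + 1 => fun x y => ∑' z, p x z * kernelIter p n z y

/-!
The profile bound says `Q(S, Sᶜ) ≥ c₀ π(S) ^ (1 - 1/d)`. By a co-area argument and Cauchy–Schwarz it
gives a Faber–Krahn inequality on sets of bounded volume, and truncating a function of `L¹` norm one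
turns this into Nash's inequality, which bounds the Dirichlet energy from below by
`‖f‖₂ ^ (2 + 4/d)`. Each step of the lazy walk lowers `‖f‖₂²` by at least half the energy of `f`, so
its heat kernel has `‖h‖₂²` of order `n ^ (-d/2)`, and Cauchy–Schwarz extends this decay off the
diagonal. A walk needs `dist(u, v)` steps to reach `v` from `u`, so its Green's function is bounded
by a tail of `∑ n ^ (-d/2)`, of order `dist(u, v) ^ (1 - d/2)`. Laziness doubles the Green's
function.

Conductances and functions are `ℝ≥0∞`-valued until the final comparison, so that no summability has
to be known in advance.
-/

section OrderedSemiring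

theorem sq_le_sq_tsub_add {R : Type*} [CommSemiring R] [PartialOrder R] [IsOrderedRing R]
    [CanonicallyOrderedAdd R] [Sub R] [OrderedSub R] (a t : R) :
    a ^ 2 ≤ (a - t) ^ 2 + 2 * (t * a) := by
  calc a ^ 2 = a * a := sq a
    _ ≤ (a - t + t) * a := by gcongr; exact le_tsub_add
    _ = (a - t) * a + t * a := add_mul _ _ _
    _ ≤ (a - t) * (a - t + t) + t * a := by gcongr; exact le_tsub_add
    _ = (a - t) ^ 2 + t * (a - t) + t * a := by ring
    _ ≤ (a - t) ^ 2 + t * a + t * a := by gcongr; exact tsub_le_self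
    _ = (a - t) ^ 2 + 2 * (t * a) := by ring

variable {R : Type*} [CommSemiring R] [LinearOrder R] [CanonicallyOrderedAdd R]

theorem two_mul_mul_le_sq_add_sq (a b : R) : 2 * (a * b) ≤ a ^ 2 + b ^ 2 := by
  wlog h : b ≤ a generalizing a b
  · rw [mul_comm a, add_comm]
    exact this b a (le_of_not_ge h)
  obtain ⟨δ, rfl⟩ := exists_add_of_le h
  calc 2 * ((b + δ) * b) ≤ 2 * ((b + δ) * b) + δ ^ 2 := le_self_add
    _ = (b + δ) ^ 2 + b ^ 2 := by ring

variable [IsOrderedRing R] [Sub R] [OrderedSub R]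

theorem sq_tsub_sq_le (a b : R) : a ^ 2 - b ^ 2 ≤ 2 * ((a - b) * a) := by
  rw [tsub_le_iff_right]
  rcases le_total a b with h | h
  · calc a ^ 2 ≤ b ^ 2 := by gcongr
      _ ≤ 2 * ((a - b) * a) + b ^ 2 := le_add_self
  · have ha : a - b + b = a := tsub_add_cancel_of_le h
    generalize a - b = δ at ha ⊢
    subst ha
    calc (δ + b) ^ 2 ≤ (δ + b) ^ 2 + δ ^ 2 := le_self_add
      _ = 2 * (δ * (δ + b)) + b ^ 2 := by ring

theorem sq_add_add_sq_tsub_add_sq_tsub_le (a b : R) :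
    (a + b) ^ 2 + ((a - b) ^ 2 + (b - a) ^ 2) ≤ 2 * (a ^ 2 + b ^ 2) := by
  wlog h : b ≤ a generalizing a b
  · simpa only [add_comm] using this b a (le_of_not_ge h)
  obtain ⟨δ, rfl⟩ := exists_add_of_le h
  have hδ : b + δ - b ≤ δ := tsub_le_iff_left.2 le_rfl
  rw [tsub_eq_zero_of_le h]
  calc (b + δ + b) ^ 2 + ((b + δ - b) ^ 2 + 0 ^ 2) ≤ (b + δ + b) ^ 2 + (δ ^ 2 + 0 ^ 2) := by gcongr
    _ = 2 * ((b + δ) ^ 2 + b ^ 2) := by ring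

end OrderedSemiring

section CauchySchwarz

theorem sq_tsum_mul_le {ι : Type*} (p a b : ι → ℝ≥0∞) :
    (∑' i, p i * (a i * b i)) ^ 2 ≤ (∑' i, p i * a i ^ 2) * ∑' i, p i * b i ^ 2 := by
  have hprod (f g : ι → ℝ≥0∞) : (∑' i, f i) * ∑' j, g j = ∑' i, ∑' j, f i * g j := by
    simp_rw [ENNReal.tsum_mul_left, ENNReal.tsum_mul_right]
  refine (ENNReal.mul_le_mul_iff_right two_ne_zero ENNReal.ofNat_ne_top).1 ?_
  calc 2 * (∑' i, p i * (a i * b i)) ^ 2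
      = ∑' i, ∑' j, p i * p j * (2 * ((a i * b j) * (a j * b i))) := by
        simp_rw [sq, hprod, ← ENNReal.tsum_mul_left]
        exact tsum_congr fun i => tsum_congr fun j => by ring
    _ ≤ ∑' i, ∑' j, p i * p j * ((a i * b j) ^ 2 + (a j * b i) ^ 2) := by
        gcongr
        exact two_mul_mul_le_sq_add_sq _ _
    _ = ∑' i, ∑' j, (p i * a i ^ 2 * (p j * b j ^ 2) + p i * b i ^ 2 * (p j * a j ^ 2)) :=
        tsum_congr fun i => tsum_congr fun j => by ring
    _ = 2 * ((∑' i, p i * a i ^ 2) * ∑' i, p i * b i ^ 2) := by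
        simp_rw [ENNReal.tsum_add, ← hprod]
        ring

end CauchySchwarz

section RealSequences

theorem mul_rpow_le_one_of_le_mul_one_sub {a : ℕ → ℝ} {β κ ρ : ℝ} (ha : ∀ n, 0 ≤ a n)
    (hβ : 0 ≤ β) (hρ : 0 ≤ ρ) (hρκ : ρ ≤ β * κ) (ha0 : ρ * a 0 ^ β ≤ 1)
    (hstep : ∀ n, a (n + 1) ≤ a n * (1 - κ * a n ^ β)) (n : ℕ) : ρ * (n + 1) * a n ^ β ≤ 1 := by
  induction n with
  | zero => simpa using ha0
  | succ n ih =>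
  set y := a n ^ β
  have hy : 0 ≤ y := Real.rpow_nonneg (ha n) β
  have hdecr : a (n + 1) ≤ a n * Real.exp (-(κ * y)) :=
    (hstep n).trans (mul_le_mul_of_nonneg_left (Real.one_sub_le_exp_neg _) (ha n))
  have hexp : 1 + ρ * y ≤ Real.exp (β * κ * y) := by
    calc 1 + ρ * y ≤ β * κ * y + 1 := by rw [add_comm]; gcongr
      _ ≤ Real.exp (β * κ * y) := Real.add_one_le_exp _
  have hnext : a (n + 1) ^ β * (1 + ρ * y) ≤ y := by
    calc a (n + 1) ^ β * (1 + ρ * y)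
        ≤ (a n * Real.exp (-(κ * y))) ^ β * Real.exp (β * κ * y) :=
          mul_le_mul (Real.rpow_le_rpow (ha (n + 1)) hdecr hβ) hexp (by positivity)
            (Real.rpow_nonneg (mul_nonneg (ha n) (Real.exp_nonneg _)) β)
      _ = y := by
          rw [Real.mul_rpow (ha n) (Real.exp_nonneg _), ← Real.exp_mul, mul_assoc, ← Real.exp_add,
            show -(κ * y) * β + β * κ * y = 0 by ring, Real.exp_zero, mul_one]
  have hpos : 0 < 1 + ρ * y := by positivity
  refine le_of_mul_le_mul_right ?_ hpos
  calc ρ * (↑(n + 1) + 1) * a (n + 1) ^ β * (1 + ρ * y)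
      = ρ * (n + 2) * (a (n + 1) ^ β * (1 + ρ * y)) := by push_cast; ring
    _ ≤ ρ * (n + 2) * y := by gcongr
    _ ≤ 1 * (1 + ρ * y) := by linarith

theorem tsum_ofReal_rpow_neg_le {s : ℝ} (hs : 1 < s) {N : ℕ} (hN : 0 < N) :
    ∑' n : ℕ, ENNReal.ofReal (((n + N : ℕ) + 1 : ℝ) ^ (-s)) ≤
      ENNReal.ofReal ((N : ℝ) ^ (1 - s) / (s - 1)) := by
  have hN' : (0 : ℝ) < N := Nat.cast_pos.2 hN
  have hanti : AntitoneOn (fun t : ℝ => t ^ (-s)) (Set.Ici N) := fun x hx y _ hxy =>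
    Real.rpow_le_rpow_of_nonpos (hN'.trans_le hx) hxy (by linarith)
  have hsummable : Summable fun n : ℕ => ((n + N : ℕ) + 1 : ℝ) ^ (-s) := by
    exact_mod_cast (summable_nat_add_iff (N + 1)).2 (Real.summable_nat_rpow.2 (neg_lt_neg hs))
  rw [← ENNReal.ofReal_tsum_of_nonneg (fun n => by positivity) hsummable]
  refine ENNReal.ofReal_le_ofReal ?_
  calc ∑' n : ℕ, ((n + N : ℕ) + 1 : ℝ) ^ (-s) ≤ ∫ t in Set.Ioi (N : ℝ), t ^ (-s) := by
        exact_mod_cast hanti.tsum_comp_add_le_integral N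
          (integrableOn_Ioi_rpow_of_lt (neg_lt_neg hs) hN')
          fun t ht => Real.rpow_nonneg (hN'.trans ht).le _
    _ = (N : ℝ) ^ (1 - s) / (s - 1) := by
        rw [integral_Ioi_rpow_of_lt (neg_lt_neg hs) hN', neg_add_eq_sub, neg_div, ← div_neg,
          neg_sub]

theorem ofReal_tsum_le {ι : Type*} {f : ι → ℝ} (hf : ∀ i, 0 ≤ f i) :
    ENNReal.ofReal (∑' i, f i) ≤ ∑' i, ENNReal.ofReal (f i) := by
  by_cases hsum : Summable f
  · exact (ENNReal.ofReal_tsum_of_nonneg hf hsum).le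
  · simp [tsum_eq_zero_of_not_summable hsum]

theorem summable_and_tsum_le_of_tsum_ofReal_le {ι : Type*} {f : ι → ℝ} (hf : ∀ i, 0 ≤ f i) {C : ℝ}
    (hC : 0 ≤ C) (h : ∑' i, ENNReal.ofReal (f i) ≤ ENNReal.ofReal C) :
    Summable f ∧ ∑' i, f i ≤ C := by
  refine ⟨?_, (ENNReal.ofReal_le_ofReal_iff hC).1 ((ofReal_tsum_le hf).trans h)⟩
  simpa only [ENNReal.toReal_ofReal (hf _)] using
    ENNReal.summable_toReal (ne_top_of_le_ne_top ENNReal.ofReal_ne_top h)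

end RealSequences

/-- The total conductance at `x`, i.e. the stationary measure of the random walk. -/
noncomputable def mass {V : Type*} (w : V → V → ℝ≥0∞) (x : V) : ℝ≥0∞ := ∑' y, w x y

/-- The flow `Q(S, Sᶜ)` out of a finite set of vertices. -/
noncomputable def boundaryFlow {V : Type*} [DecidableEq V] (w : V → V → ℝ≥0∞) (S : Finset V) :
    ℝ≥0∞ :=
  ∑ x ∈ S, ∑' y, if y ∈ S then 0 else w x y

/-- The `d`-dimensional isoperimetric inequality `Q(S, Sᶜ) ≥ κ π(S) ^ (1 - 1/d)`, which is the
bound `Φ(u) ≥ κ u ^ (-1/d)` on the expansion profile freed from the auxiliary volume `u`. -/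
def IsIsoperimetric {V : Type*} [DecidableEq V] (w : V → V → ℝ≥0∞) (d : ℝ) (κ : ℝ≥0∞) : Prop :=
  ∀ S : Finset V, κ * (∑ x ∈ S, mass w x) ^ (1 - 1 / d) ≤ boundaryFlow w S

/-- The pairing of `L²(π)`. -/
noncomputable def pairing {V : Type*} (w : V → V → ℝ≥0∞) (f g : V → ℝ≥0∞) : ℝ≥0∞ :=
  ∑' x, mass w x * (f x * g x)

/-- The Dirichlet energy of a function. Subtraction is truncated, so that for symmetric `w` the
sum over ordered pairs counts every edge once. -/
noncomputable def energy {V : Type*} (w : V → V → ℝ≥0∞) (f : V → ℝ≥0∞) : ℝ≥0∞ :=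
  ∑' x, ∑' y, w x y * (f x - f y) ^ 2

section Functionals

variable {V : Type*} {w : V → V → ℝ≥0∞}

theorem tsum_tsum_mul_left_eq_pairing_one (w : V → V → ℝ≥0∞) (f : V → ℝ≥0∞) :
    ∑' x, ∑' y, w x y * f x = pairing w f 1 := by
  simp only [ENNReal.tsum_mul_right, pairing, mass, Pi.one_apply, mul_one]

theorem tsum_tsum_mul_right_eq_pairing_one (hsymm : ∀ x y, w x y = w y x) (f : V → ℝ≥0∞) :
    ∑' x, ∑' y, w x y * f y = pairing w f 1 := by
  rw [ENNReal.tsum_comm, ← tsum_tsum_mul_left_eq_pairing_one]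
  exact tsum_congr fun x => tsum_congr fun y => by rw [hsymm]

theorem pairing_comm (w : V → V → ℝ≥0∞) (f g : V → ℝ≥0∞) : pairing w f g = pairing w g f :=
  tsum_congr fun x => by rw [mul_comm (f x)]

theorem pairing_self (w : V → V → ℝ≥0∞) (f : V → ℝ≥0∞) :
    pairing w f f = pairing w (f ^ 2) 1 := by
  simp only [pairing, Pi.pow_apply, Pi.one_apply, mul_one, sq]

theorem sq_pairing_le (w : V → V → ℝ≥0∞) (f g : V → ℝ≥0∞) :
    pairing w f g ^ 2 ≤ pairing w f f * pairing w g g := by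
  simpa only [pairing, sq] using sq_tsum_mul_le (mass w) f g

theorem energy_tsub_const_le (w : V → V → ℝ≥0∞) (f : V → ℝ≥0∞) (t : ℝ≥0∞) :
    energy w (fun x => f x - t) ≤ energy w f := by
  have hsub (x y : V) : f x - t - (f y - t) ≤ f x - f y := tsub_le_iff_right.2 tsub_le_tsub_add_tsub
  exact ENNReal.tsum_le_tsum fun x => ENNReal.tsum_le_tsum fun y =>
    mul_le_mul_right (pow_le_pow_left' (hsub x y) 2) _

theorem pairing_self_le_pairing_tsub_const_add (w : V → V → ℝ≥0∞) (f : V → ℝ≥0∞) (t : ℝ≥0∞) :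
    pairing w f f ≤ pairing w (fun x => f x - t) (fun x => f x - t) + 2 * (t * pairing w f 1) := by
  simp_rw [pairing, ← ENNReal.tsum_mul_left, ← ENNReal.tsum_add]
  refine ENNReal.tsum_le_tsum fun x => ?_
  calc mass w x * (f x * f x) ≤ mass w x * ((f x - t) ^ 2 + 2 * (t * f x)) := by
        rw [← sq]
        gcongr
        exact sq_le_sq_tsub_add _ _
    _ = _ := by rw [Pi.one_apply]; ring

theorem pairing_self_le_two_mul_pairing_tsub_const {f : V → ℝ≥0∞} (hf1 : pairing w f 1 ≤ 1)
    (hf2 : pairing w f f ≠ ∞) :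
    pairing w f f ≤
      2 * pairing w (fun x => f x - pairing w f f / 4) (fun x => f x - pairing w f f / 4) := by
  set t := pairing w f f / 4
  set P := pairing w (fun x => f x - t) (fun x => f x - t)
  have ht : pairing w f f = 4 * t := (ENNReal.mul_div_cancel four_ne_zero ENNReal.ofNat_ne_top).symm
  have ht_fin : 2 * t ≠ ∞ :=
    ENNReal.mul_ne_top ENNReal.ofNat_ne_top (ENNReal.div_ne_top hf2 four_ne_zero)
  have htrunc : 2 * t + 2 * t ≤ P + 2 * t := by
    calc 2 * t + 2 * t = pairing w f f := by rw [ht]; ring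
      _ ≤ P + 2 * (t * pairing w f 1) := pairing_self_le_pairing_tsub_const_add w f t
      _ ≤ P + 2 * (t * 1) := by gcongr
      _ = P + 2 * t := by rw [mul_one]
  calc pairing w f f = 2 * (2 * t) := by rw [ht]; ring
    _ ≤ 2 * P := by
      gcongr
      exact (ENNReal.add_le_add_iff_right ht_fin).1 htrunc

theorem mul_sum_mass_le_pairing_one (w : V → V → ℝ≥0∞) {f : V → ℝ≥0∞} {t : ℝ≥0∞} {S : Finset V}
    (hS : ∀ x ∈ S, t ≤ f x) : t * ∑ x ∈ S, mass w x ≤ pairing w f 1 := by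
  rw [Finset.mul_sum]
  refine (Finset.sum_le_sum fun x hx => ?_).trans (ENNReal.sum_le_tsum S)
  rw [Pi.one_apply, mul_one, mul_comm t]
  gcongr
  exact hS x hx

end Functionals

section Nash

variable {V : Type*} [DecidableEq V] {w : V → V → ℝ≥0∞}

theorem mul_boundaryFlow_eq_tsum_tsum (w : V → V → ℝ≥0∞) (m : ℝ≥0∞) (T : Finset V) :
    m * boundaryFlow w T = ∑' x, ∑' y, w x y * (if x ∈ T ∧ y ∉ T then m else 0) := by
  rw [boundaryFlow, Finset.mul_sum, tsum_eq_sum (s := T) fun x hx => by simp [hx]]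
  refine Finset.sum_congr rfl fun x hx => ?_
  rw [← ENNReal.tsum_mul_left]
  refine tsum_congr fun y => ?_
  by_cases hy : y ∈ T <;> simp [hx, hy, mul_comm]

/- Peeling off the minimum `m` of `f` on `T` splits both sides: `f = m 1_T + f'`, where `f'`
vanishes outside a smaller set, and `f x - f y` dominates `m` on the edges leaving `T`. -/
theorem mul_pairing_one_le_tsum_tsum_tsub {φ : ℝ≥0∞} {T : Finset V}
    (hT : ∀ S ⊆ T, φ * ∑ x ∈ S, mass w x ≤ boundaryFlow w S) {f : V → ℝ≥0∞}
    (hf : ∀ x ∉ T, f x = 0) :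
    φ * pairing w f 1 ≤ ∑' x, ∑' y, w x y * (f x - f y) := by
  induction T using Finset.strongInduction generalizing f with
  | H T ih =>
  rcases T.eq_empty_or_nonempty with rfl | hne
  · simp [pairing, hf]
  obtain ⟨x₀, hx₀, hmin⟩ := T.exists_min_image f hne
  set m := f x₀
  set f' : V → ℝ≥0∞ := fun x => f x - m
  have ih' : φ * pairing w f' 1 ≤ ∑' x, ∑' y, w x y * (f' x - f' y) := by
    refine ih (T.erase x₀) (Finset.erase_ssubset hx₀)
      (fun S hS => hT S (hS.trans (Finset.erase_subset x₀ T))) fun x hx => ?_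
    rcases eq_or_ne x x₀ with rfl | hne
    · exact tsub_self _
    · simp [f', hf x fun h => hx (Finset.mem_erase.2 ⟨hne, h⟩)]
  have hpairing : pairing w f 1 = m * ∑ x ∈ T, mass w x + pairing w f' 1 := by
    have hsplit (x : V) :
        mass w x * f x = (if x ∈ T then m * mass w x else 0) + mass w x * f' x := by
      split_ifs with hx
      · rw [mul_comm m, ← mul_add, add_tsub_cancel_of_le (hmin x hx)]
      · simp [f', hf x hx]
    simp only [pairing, Pi.one_apply, mul_one, hsplit, ENNReal.tsum_add]
    rw [tsum_eq_sum (s := T) fun x hx => if_neg hx, Finset.mul_sum]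
    exact congrArg (· + _) (Finset.sum_congr rfl fun x hx => if_pos hx)
  calc φ * pairing w f 1 = m * (φ * ∑ x ∈ T, mass w x) + φ * pairing w f' 1 := by
        rw [hpairing]; ring
    _ ≤ m * boundaryFlow w T + ∑' x, ∑' y, w x y * (f' x - f' y) := by
        gcongr
        exact hT T subset_rfl
    _ = ∑' x, ∑' y, w x y * ((if x ∈ T ∧ y ∉ T then m else 0) + (f' x - f' y)) := by
        simp_rw [mul_boundaryFlow_eq_tsum_tsum, mul_add, ENNReal.tsum_add]
    _ ≤ ∑' x, ∑' y, w x y * (f x - f y) := by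
        gcongr with x y
        split_ifs with h
        · simp [f', hf y h.2, add_tsub_cancel_of_le (hmin x h.1)]
        · simpa only [zero_add] using tsub_le_iff_right.2 tsub_le_tsub_add_tsub

theorem sq_mul_pairing_self_le {φ : ℝ≥0∞} {T : Finset V}
    (hT : ∀ S ⊆ T, φ * ∑ x ∈ S, mass w x ≤ boundaryFlow w S) {g : V → ℝ≥0∞}
    (hg : ∀ x ∉ T, g x = 0) (hfin : pairing w g g ≠ ∞) :
    φ ^ 2 * pairing w g g ≤ 4 * energy w g := by
  have hcoarea : φ * pairing w g g ≤ 2 * ∑' x, ∑' y, w x y * ((g x - g y) * g x) := by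
    calc φ * pairing w g g ≤ ∑' x, ∑' y, w x y * (g x ^ 2 - g y ^ 2) := by
          rw [pairing_self]
          exact mul_pairing_one_le_tsum_tsum_tsub hT fun x hx => by simp [hg x hx]
      _ ≤ ∑' x, ∑' y, w x y * (2 * ((g x - g y) * g x)) := by
          gcongr
          exact sq_tsub_sq_le _ _
      _ = 2 * ∑' x, ∑' y, w x y * ((g x - g y) * g x) := by
          simp_rw [mul_left_comm _ (2 : ℝ≥0∞), ENNReal.tsum_mul_left]
  have hcs : (∑' x, ∑' y, w x y * ((g x - g y) * g x)) ^ 2 ≤ energy w g * pairing w g g := by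
    rw [pairing_self, ← tsum_tsum_mul_left_eq_pairing_one, energy]
    simp_rw [← ENNReal.tsum_prod]
    exact sq_tsum_mul_le (fun e : V × V => w e.1 e.2) (fun e => g e.1 - g e.2) fun e => g e.1
  rcases eq_or_ne (pairing w g g) 0 with h0 | h0
  · simp [h0]
  refine (ENNReal.mul_le_mul_iff_right h0 hfin).1 ?_
  calc pairing w g g * (φ ^ 2 * pairing w g g) = (φ * pairing w g g) ^ 2 := by ring
    _ ≤ (2 * ∑' x, ∑' y, w x y * ((g x - g y) * g x)) ^ 2 := by gcongr
    _ = 4 * (∑' x, ∑' y, w x y * ((g x - g y) * g x)) ^ 2 := by ring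
    _ ≤ 4 * (energy w g * pairing w g g) := by gcongr
    _ = pairing w g g * (4 * energy w g) := by ring

theorem IsIsoperimetric.rpow_le_mass {d : ℝ} {κ : ℝ≥0∞} (h : IsIsoperimetric w d κ) (hd : 1 ≤ d)
    {x : V} (h0 : mass w x ≠ 0) (hfin : mass w x ≠ ∞) : κ ^ d ≤ mass w x := by
  have hd0 : 0 < d := one_pos.trans_le hd
  have hboundary : boundaryFlow w {x} ≤ mass w x := by
    rw [boundaryFlow, Finset.sum_singleton]
    refine ENNReal.tsum_le_tsum fun y => ?_
    split_ifs
    exacts [zero_le, le_rfl]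
  have hκ : κ ≤ mass w x ^ (1 / d) := by
    refine (ENNReal.mul_le_mul_iff_right (a := mass w x ^ (1 - 1 / d))
      (by simp [ENNReal.rpow_eq_zero_iff, h0, hfin])
      (by simp [ENNReal.rpow_eq_top_iff, h0, hfin])).1 ?_
    calc mass w x ^ (1 - 1 / d) * κ ≤ mass w x := by
          simpa only [Finset.sum_singleton, mul_comm] using (h {x}).trans hboundary
      _ = mass w x ^ (1 - 1 / d) * mass w x ^ (1 / d) := by
          rw [← ENNReal.rpow_add _ _ h0 hfin, sub_add_cancel, ENNReal.rpow_one]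
  simpa only [one_div, ENNReal.rpow_inv_rpow hd0.ne'] using
    ENNReal.rpow_le_rpow hκ hd0.le

theorem IsIsoperimetric.mul_sum_mass_le_boundaryFlow {d : ℝ} {κ : ℝ≥0∞} (h : IsIsoperimetric w d κ)
    (hd : 1 ≤ d) {t : ℝ≥0∞} {S : Finset V} (hS : t * ∑ x ∈ S, mass w x ≤ 1) :
    κ * t ^ (1 / d) * ∑ x ∈ S, mass w x ≤ boundaryFlow w S := by
  have hd0 : 0 < d := one_pos.trans_le hd
  have hexp : 0 ≤ 1 - 1 / d := sub_nonneg.2 ((div_le_one hd0).2 hd)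
  set m := ∑ x ∈ S, mass w x
  calc κ * t ^ (1 / d) * m = κ * ((t * m) ^ (1 / d) * m ^ (1 - 1 / d)) := by
        rw [ENNReal.mul_rpow_of_nonneg _ _ (one_div_nonneg.2 hd0.le), mul_assoc (t ^ _),
          ← ENNReal.rpow_add_of_nonneg _ _ (one_div_nonneg.2 hd0.le) hexp, add_sub_cancel,
          ENNReal.rpow_one, mul_assoc]
    _ ≤ κ * (1 * m ^ (1 - 1 / d)) := by
        gcongr
        exact ENNReal.rpow_le_one hS (one_div_nonneg.2 hd0.le)
    _ ≤ boundaryFlow w S := by simpa only [one_mul] using h S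

/- With `t = A / 4`, truncating `f` at level `t` loses at most half of its `L²` norm, while Markov's
inequality bounds the volume of the sets carrying the rest by `1 / t`. -/
theorem IsIsoperimetric.nash {d : ℝ} {κ : ℝ≥0∞} (h : IsIsoperimetric w d κ) (hd : 1 ≤ d)
    (hκ : κ ≠ 0) (h0 : ∀ x, mass w x ≠ 0) (hfin : ∀ x, mass w x ≠ ∞) {f : V → ℝ≥0∞}
    (hf1 : pairing w f 1 ≤ 1) (hf2 : pairing w f f ≠ ∞) :
    κ ^ 2 * (pairing w f f / 4) ^ (2 / d) * pairing w f f ≤ 8 * energy w f := by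
  rcases eq_or_ne (pairing w f f) 0 with hA | hA
  · simp [hA]
  have hd0 : 0 < d := one_pos.trans_le hd
  set t := pairing w f f / 4
  have ht : t ≠ 0 := ENNReal.div_ne_zero.2 ⟨hA, ENNReal.ofNat_ne_top⟩
  have hlevel : {x | t ≤ f x}.Finite := by
    have hmass : κ ^ d * t ≠ 0 := by simp [ENNReal.rpow_eq_zero_iff, hκ, ht, hd0.not_gt]
    refine (ENNReal.finite_const_le_of_tsum_ne_top (ne_top_of_le_ne_top ENNReal.one_ne_top hf1)
      hmass).subset fun x (hx : t ≤ f x) => ?_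
    simpa using mul_le_mul' (h.rpow_le_mass hd (h0 x) (hfin x)) hx
  set T := hlevel.toFinset
  set g : V → ℝ≥0∞ := fun x => f x - t
  have hT (S : Finset V) (hS : S ⊆ T) : κ * t ^ (1 / d) * ∑ x ∈ S, mass w x ≤ boundaryFlow w S :=
    h.mul_sum_mass_le_boundaryFlow hd
      ((mul_sum_mass_le_pairing_one w fun x hx => hlevel.mem_toFinset.1 (hS hx)).trans hf1)
  have hg (x : V) (hx : x ∉ T) : g x = 0 :=
    tsub_eq_zero_of_le (not_le.1 fun h => hx (hlevel.mem_toFinset.2 h)).le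
  have hgf : pairing w g g ≤ pairing w f f := by
    unfold pairing g
    gcongr <;> exact tsub_le_self
  calc κ ^ 2 * t ^ (2 / d) * pairing w f f
      ≤ κ ^ 2 * t ^ (2 / d) * (2 * pairing w g g) := by
        gcongr
        exact pairing_self_le_two_mul_pairing_tsub_const hf1 hf2
    _ = 2 * ((κ * t ^ (1 / d)) ^ 2 * pairing w g g) := by
        rw [mul_pow, ← ENNReal.rpow_natCast (t ^ _), ← ENNReal.rpow_mul]
        ring_nf
    _ ≤ 2 * (4 * energy w g) := by
        gcongr 2 * ?_
        exact sq_mul_pairing_self_le hT hg (ne_top_of_le_ne_top hf2 hgf)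
    _ ≤ 2 * (4 * energy w f) := by
        gcongr
        exact energy_tsub_const_le w f t
    _ = 8 * energy w f := by ring

end Nash

/-- The transition operator `f ↦ ∑ y, p(·, y) f y` of the random walk. -/
noncomputable def markovOp {V : Type*} (w : V → V → ℝ≥0∞) (f : V → ℝ≥0∞) (x : V) : ℝ≥0∞ :=
  (mass w x)⁻¹ * ∑' y, w x y * f y

/-- The transition operator of the lazy walk, which stays put with probability `1/2`. Laziness
makes every step dissipate energy, as a parity-preserving walk need not. -/
noncomputable def lazyOp {V : Type*} (w : V → V → ℝ≥0∞) (f : V → ℝ≥0∞) (x : V) : ℝ≥0∞ :=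
  2⁻¹ * (f x + markovOp w f x)

/-- The density of the point mass at `v` with respect to the stationary measure. -/
noncomputable def normalizedDirac {V : Type*} [DecidableEq V] (w : V → V → ℝ≥0∞) (v : V) :
    V → ℝ≥0∞ :=
  Pi.single v (mass w v)⁻¹

/-- The heat kernel `x ↦ p̃ₙ(x, v) / π(v)` of the lazy walk. -/
noncomputable def lazyHeat {V : Type*} [DecidableEq V] (w : V → V → ℝ≥0∞) (v : V) (n : ℕ) :
    V → ℝ≥0∞ :=
  (lazyOp w)^[n] (normalizedDirac w v)

section Operators

variable {V : Type*} {w : V → V → ℝ≥0∞}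

theorem mass_mul_markovOp {x : V} (h0 : mass w x ≠ 0) (hfin : mass w x ≠ ∞) (f : V → ℝ≥0∞) :
    mass w x * markovOp w f x = ∑' y, w x y * f y := by
  rw [markovOp, ← mul_assoc, ENNReal.mul_inv_cancel h0 hfin, one_mul]

theorem markovOp_mono (w : V → V → ℝ≥0∞) : Monotone (markovOp w) := fun f g hfg x => by
  unfold markovOp
  gcongr
  exact hfg _

theorem markovOp_tsum {ι : Type*} (w : V → V → ℝ≥0∞) (f : ι → V → ℝ≥0∞) (x : V) :
    markovOp w (fun y => ∑' i, f i y) x = ∑' i, markovOp w (f i) x := by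
  simp_rw [markovOp, ENNReal.tsum_mul_left, ← ENNReal.tsum_mul_left (f := fun i => f i _)]
  rw [ENNReal.tsum_comm]

theorem markovOp_sum {ι : Type*} (w : V → V → ℝ≥0∞) (s : Finset ι) (f : ι → V → ℝ≥0∞) (x : V) :
    markovOp w (fun y => ∑ i ∈ s, f i y) x = ∑ i ∈ s, markovOp w (f i) x := by
  simp_rw [markovOp, Finset.mul_sum, Summable.tsum_finsetSum fun _ _ => ENNReal.summable,
    Finset.mul_sum]

theorem sum_iterate_markovOp_le {f g : V → ℝ≥0∞} (hg : ∀ x, f x + markovOp w g x ≤ g x) (N : ℕ)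
    (x : V) : ∑ n ∈ Finset.range N, (markovOp w)^[n] f x ≤ g x := by
  induction N generalizing x with
  | zero => simp
  | succ N ih =>
    calc ∑ n ∈ Finset.range (N + 1), (markovOp w)^[n] f x
        = f x + markovOp w (fun y => ∑ n ∈ Finset.range N, (markovOp w)^[n] f y) x := by
          rw [Finset.sum_range_succ', markovOp_sum, add_comm]
          simp_rw [Function.iterate_succ_apply']
          rfl
      _ ≤ f x + markovOp w g x := by
          gcongr
          exact markovOp_mono w ih x
      _ ≤ g x := hg x

theorem two_mul_lazyOp (w : V → V → ℝ≥0∞) (f : V → ℝ≥0∞) (x : V) :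
    2 * lazyOp w f x = f x + markovOp w f x := by
  rw [lazyOp, ← mul_assoc, ENNReal.mul_inv_cancel two_ne_zero ENNReal.ofNat_ne_top, one_mul]

/- The sum `S` of the lazy series solves `S = 2 f + P S`, whose least solution is the series of
`2 f` along the walk itself. -/
theorem tsum_iterate_markovOp_le {f : V → ℝ≥0∞} (hS : ∀ x, ∑' n, (lazyOp w)^[n] f x ≠ ∞) (x : V) :
    ∑' n, (markovOp w)^[n] f x ≤ 2⁻¹ * ∑' n, (lazyOp w)^[n] f x := by
  set S : V → ℝ≥0∞ := fun x => ∑' n, (lazyOp w)^[n] f x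
  have hshift (x : V) : S x = f x + ∑' n, (lazyOp w)^[n + 1] f x :=
    tsum_eq_zero_add' ENNReal.summable
  have htwice (x : V) : 2 * ∑' n, (lazyOp w)^[n + 1] f x = S x + markovOp w S x := by
    simp_rw [S, markovOp_tsum, ← ENNReal.tsum_mul_left, Function.iterate_succ_apply',
      two_mul_lazyOp, ENNReal.tsum_add]
  have hfix (x : V) : S x = 2 * f x + markovOp w S x := by
    refine (ENNReal.add_right_inj (hS x)).1 ?_
    calc S x + S x = 2 * f x + 2 * ∑' n, (lazyOp w)^[n + 1] f x := by
          rw [← mul_add, ← hshift, two_mul]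
      _ = S x + (2 * f x + markovOp w S x) := by rw [htwice, add_left_comm]
  refine ENNReal.tsum_le_of_sum_range_le fun N =>
    sum_iterate_markovOp_le (g := fun x => 2⁻¹ * S x) (fun x => ?_) N x
  have hhalf : markovOp w (fun y => 2⁻¹ * S y) x = 2⁻¹ * markovOp w S x := by
    simp_rw [markovOp, mul_left_comm _ (2⁻¹ : ℝ≥0∞), ENNReal.tsum_mul_left]
    rw [mul_left_comm]
  rw [hhalf, hfix x, mul_add, ← mul_assoc, ENNReal.inv_mul_cancel two_ne_zero ENNReal.ofNat_ne_top,
    one_mul]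

variable (h0 : ∀ x, mass w x ≠ 0) (hfin : ∀ x, mass w x ≠ ∞)

include h0 hfin

theorem lazyOp_one : lazyOp w 1 = 1 := by
  funext x
  simp only [lazyOp, markovOp, Pi.one_apply, mul_one]
  rw [← mass, ENNReal.inv_mul_cancel (h0 x) (hfin x), one_add_one_eq_two,
    ENNReal.inv_mul_cancel two_ne_zero ENNReal.ofNat_ne_top]

theorem pairing_markovOp_left (hsymm : ∀ x y, w x y = w y x) (f g : V → ℝ≥0∞) :
    pairing w (markovOp w f) g = pairing w f (markovOp w g) := by
  calc pairing w (markovOp w f) g = ∑' x, ∑' y, w x y * f y * g x :=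
        tsum_congr fun x => by
          rw [← mul_assoc, mass_mul_markovOp (h0 x) (hfin x), ENNReal.tsum_mul_right]
    _ = ∑' x, ∑' y, w x y * g y * f x := by
        rw [ENNReal.tsum_comm]
        exact tsum_congr fun x => tsum_congr fun y => by rw [hsymm]; ring
    _ = pairing w f (markovOp w g) :=
        tsum_congr fun x => by
          rw [mul_comm (f x), ← mul_assoc, mass_mul_markovOp (h0 x) (hfin x),
            ENNReal.tsum_mul_right]

theorem pairing_lazyOp_left (hsymm : ∀ x y, w x y = w y x) (f g : V → ℝ≥0∞) :
    pairing w (lazyOp w f) g = pairing w f (lazyOp w g) := by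
  have hexpand (f g : V → ℝ≥0∞) :
      pairing w (lazyOp w f) g = 2⁻¹ * (pairing w f g + pairing w (markovOp w f) g) := by
    simp_rw [pairing, ← ENNReal.tsum_add, ← ENNReal.tsum_mul_left, lazyOp]
    exact tsum_congr fun x => by ring
  rw [pairing_comm w f, hexpand, hexpand, pairing_markovOp_left h0 hfin hsymm, pairing_comm w f,
    pairing_comm w f]

theorem pairing_iterate_lazyOp_left (hsymm : ∀ x y, w x y = w y x) (n : ℕ) (f g : V → ℝ≥0∞) :
    pairing w ((lazyOp w)^[n] f) g = pairing w f ((lazyOp w)^[n] g) := by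
  induction n generalizing f with
  | zero => rfl
  | succ n ih => rw [Function.iterate_succ_apply, ih, pairing_lazyOp_left h0 hfin hsymm,
      Function.iterate_succ_apply']

theorem four_mul_mass_mul_sq_lazyOp_le (f : V → ℝ≥0∞) (x : V) :
    4 * (mass w x * lazyOp w f x ^ 2) ≤ ∑' y, w x y * (f x + f y) ^ 2 := by
  have hsum : mass w x * (2 * lazyOp w f x) = ∑' y, w x y * (1 * (f x + f y)) := by
    simp_rw [two_mul_lazyOp, mul_add, mass_mul_markovOp (h0 x) (hfin x), one_mul, ENNReal.tsum_add,
      ENNReal.tsum_mul_right, mass]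
  refine (ENNReal.mul_le_mul_iff_right (h0 x) (hfin x)).1 ?_
  calc mass w x * (4 * (mass w x * lazyOp w f x ^ 2))
      = (mass w x * (2 * lazyOp w f x)) ^ 2 := by ring
    _ ≤ (∑' y, w x y * 1 ^ 2) * ∑' y, w x y * (f x + f y) ^ 2 := by
        rw [hsum]
        exact sq_tsum_mul_le (w x) 1 fun y => f x + f y
    _ = mass w x * ∑' y, w x y * (f x + f y) ^ 2 := by simp only [one_pow, mul_one, mass]

theorem two_mul_pairing_lazyOp_add_energy_le (hsymm : ∀ x y, w x y = w y x) (f : V → ℝ≥0∞) :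
    2 * pairing w (lazyOp w f) (lazyOp w f) + energy w f ≤ 2 * pairing w f f := by
  have henergy : ∑' x, ∑' y, w x y * (f y - f x) ^ 2 = energy w f := by
    rw [ENNReal.tsum_comm, energy]
    exact tsum_congr fun x => tsum_congr fun y => by rw [hsymm]
  refine (ENNReal.mul_le_mul_iff_right two_ne_zero ENNReal.ofNat_ne_top).1 ?_
  calc 2 * (2 * pairing w (lazyOp w f) (lazyOp w f) + energy w f)
      = ∑' x, 4 * (mass w x * lazyOp w f x ^ 2) + (energy w f + energy w f) := by
        rw [ENNReal.tsum_mul_left, pairing]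
        simp only [sq]
        ring
    _ ≤ ∑' x, ∑' y, w x y * (f x + f y) ^ 2 + (energy w f + energy w f) := by
        gcongr
        exact four_mul_mass_mul_sq_lazyOp_le h0 hfin f _
    _ = ∑' x, ∑' y, w x y * ((f x + f y) ^ 2 + ((f x - f y) ^ 2 + (f y - f x) ^ 2)) := by
        nth_rw 2 [← henergy]
        simp_rw [energy, mul_add, ENNReal.tsum_add]
    _ ≤ ∑' x, ∑' y, w x y * (2 * (f x ^ 2 + f y ^ 2)) := by
        gcongr
        exact sq_add_add_sq_tsub_add_sq_tsub_le _ _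
    _ = 2 * (2 * pairing w f f) := by
        simp_rw [mul_left_comm _ (2 : ℝ≥0∞), ENNReal.tsum_mul_left, mul_add, ENNReal.tsum_add]
        rw [tsum_tsum_mul_left_eq_pairing_one w (fun x => f x ^ 2),
          tsum_tsum_mul_right_eq_pairing_one hsymm (fun x => f x ^ 2), ← two_mul, pairing_self]
        rfl

end Operators

/-- The rate at which Nash's inequality makes `‖hₙ‖₂ ^ (-4/d)` grow along the lazy walk. -/
noncomputable def decayRate (d c₀ : ℝ) : ℝ := 2 / d * (c₀ ^ 2 / (16 * 4 ^ (2 / d)))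

theorem decayRate_pos {d c₀ : ℝ} (hd : 0 < d) (hc₀ : 0 < c₀) : 0 < decayRate d c₀ := by
  unfold decayRate
  positivity

/-- The constant `C(d, c₀)` of the bound on the Green's function. -/
noncomputable def greenConst (d c₀ : ℝ) : ℝ := (decayRate d c₀ / 2) ^ (-(d / 2)) / (d - 2)

theorem greenConst_pos {d c₀ : ℝ} (hd : 2 < d) (hc₀ : 0 < c₀) : 0 < greenConst d c₀ :=
  div_pos (Real.rpow_pos_of_pos (half_pos (decayRate_pos (two_pos.trans hd) hc₀)) _)
    (sub_pos.2 hd)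

section HeatKernel

variable {V : Type*} [DecidableEq V] {w : V → V → ℝ≥0∞}

theorem lazyHeat_succ (w : V → V → ℝ≥0∞) (v : V) (n : ℕ) :
    lazyHeat w v (n + 1) = lazyOp w (lazyHeat w v n) :=
  Function.iterate_succ_apply' _ _ _

theorem pairing_normalizedDirac {v : V} (h0 : mass w v ≠ 0) (hfin : mass w v ≠ ∞)
    (f : V → ℝ≥0∞) : pairing w (normalizedDirac w v) f = f v := by
  rw [pairing, tsum_eq_single v fun x hx => by simp [normalizedDirac, hx], normalizedDirac,
    Pi.single_eq_same, ← mul_assoc, ENNReal.mul_inv_cancel h0 hfin, one_mul]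

theorem pairing_lazyHeat_zero {v : V} (h0 : mass w v ≠ 0) (hfin : mass w v ≠ ∞) :
    pairing w (lazyHeat w v 0) (lazyHeat w v 0) = (mass w v)⁻¹ := by
  rw [lazyHeat, Function.iterate_zero_apply, pairing_normalizedDirac h0 hfin, normalizedDirac,
    Pi.single_eq_same]

theorem lazyHeat_eq_zero_of_lt_dist {G : SimpleGraph V}
    (hadj : ∀ x y, x ≠ y → w x y ≠ 0 → G.Adj x y) (hG : G.Connected) {u v : V} {n : ℕ}
    (hn : n < G.dist u v) : lazyHeat w v n u = 0 := by
  induction n generalizing u with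
  | zero =>
    refine Pi.single_eq_of_ne ?_ _
    rintro rfl
    simp at hn
  | succ n ih =>
    have hneighbour (y : V) : w u y * lazyHeat w v n y = 0 := by
      by_contra hne
      obtain ⟨hwy, hy⟩ := mul_ne_zero_iff.1 hne
      have hle : G.dist y v ≤ n := not_lt.1 fun h => hy (ih h)
      have hne' : u ≠ y := by rintro rfl; lia
      have hone : G.dist u y = 1 := SimpleGraph.dist_eq_one_iff_adj.2 (hadj u y hne' hwy)
      have := hG.dist_triangle (u := u) (v := y) (w := v)
      lia
    rw [lazyHeat_succ, lazyOp, markovOp, ih (by lia), tsum_congr hneighbour]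
    simp only [tsum_zero, mul_zero, add_zero]

theorem IsIsoperimetric.toReal_pairing_lazyOp_le {d c₀ : ℝ}
    (hiso : IsIsoperimetric w d (ENNReal.ofReal c₀)) (hd : 1 ≤ d) (hc₀ : 0 < c₀)
    (h0 : ∀ x, mass w x ≠ 0) (hfin : ∀ x, mass w x ≠ ∞) (hsymm : ∀ x y, w x y = w y x)
    {f : V → ℝ≥0∞} (hf1 : pairing w f 1 ≤ 1) (hf2 : pairing w f f ≠ ∞) :
    (pairing w (lazyOp w f) (lazyOp w f)).toReal ≤
      (pairing w f f).toReal *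
        (1 - c₀ ^ 2 / (16 * 4 ^ (2 / d)) * (pairing w f f).toReal ^ (2 / d)) := by
  have hdecr : 16 * pairing w (lazyOp w f) (lazyOp w f) +
      ENNReal.ofReal c₀ ^ 2 * (pairing w f f / 4) ^ (2 / d) * pairing w f f ≤
        16 * pairing w f f := by
    calc _ ≤ 16 * pairing w (lazyOp w f) (lazyOp w f) + 8 * energy w f := by
          gcongr _ + ?_
          exact hiso.nash hd (ENNReal.ofReal_pos.2 hc₀).ne' h0 hfin hf1 hf2
      _ = 8 * (2 * pairing w (lazyOp w f) (lazyOp w f) + energy w f) := by ring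
      _ ≤ 8 * (2 * pairing w f f) := by
          gcongr
          exact two_mul_pairing_lazyOp_add_energy_le h0 hfin hsymm f
      _ = 16 * pairing w f f := by ring
  have hfin16 : 16 * pairing w f f ≠ ∞ := ENNReal.mul_ne_top ENNReal.ofNat_ne_top hf2
  have hreal := ENNReal.toReal_mono hfin16 hdecr
  rw [ENNReal.toReal_add (ne_top_of_le_ne_top hfin16 (le_self_add.trans hdecr))
    (ne_top_of_le_ne_top hfin16 (le_add_self.trans hdecr))] at hreal
  simp only [ENNReal.toReal_mul, ENNReal.toReal_pow, ← ENNReal.toReal_rpow, ENNReal.toReal_div,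
    ENNReal.toReal_ofNat, ENNReal.toReal_ofReal hc₀.le,
    Real.div_rpow ENNReal.toReal_nonneg zero_le_four] at hreal
  rw [mul_one_sub, le_sub_iff_add_le, ← mul_le_mul_iff_right₀ (a := 16) (by norm_num)]
  refine le_of_eq_of_le ?_ hreal
  field_simp

variable (h0 : ∀ x, mass w x ≠ 0) (hfin : ∀ x, mass w x ≠ ∞) (hsymm : ∀ x y, w x y = w y x)

include h0 hfin hsymm

theorem pairing_lazyHeat_lazyHeat (u v : V) (m n : ℕ) :
    pairing w (lazyHeat w u m) (lazyHeat w v n) = lazyHeat w v (m + n) u := by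
  rw [lazyHeat, pairing_iterate_lazyOp_left h0 hfin hsymm,
    pairing_normalizedDirac (h0 u) (hfin u), lazyHeat, ← Function.iterate_add_apply]
  rfl

theorem pairing_lazyHeat_one (v : V) (n : ℕ) : pairing w (lazyHeat w v n) 1 = 1 := by
  rw [lazyHeat, pairing_iterate_lazyOp_left h0 hfin hsymm,
    Function.iterate_fixed (lazyOp_one h0 hfin), pairing_normalizedDirac (h0 v) (hfin v),
    Pi.one_apply]

theorem pairing_lazyHeat_self_ne_top (v : V) (n : ℕ) :
    pairing w (lazyHeat w v n) (lazyHeat w v n) ≠ ∞ := by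
  induction n with
  | zero => simpa only [pairing_lazyHeat_zero (h0 v) (hfin v)] using ENNReal.inv_ne_top.2 (h0 v)
  | succ n ih =>
    rw [lazyHeat_succ]
    refine ne_top_of_le_ne_top ih ?_
    refine (ENNReal.mul_le_mul_iff_right two_ne_zero ENNReal.ofNat_ne_top).1 ?_
    exact le_self_add.trans (two_mul_pairing_lazyOp_add_energy_le h0 hfin hsymm _)

theorem decayRate_mul_toReal_pairing_lazyHeat_rpow_le_one {d c₀ : ℝ} (hd : 1 ≤ d) (hc₀ : 0 < c₀)
    (hiso : IsIsoperimetric w d (ENNReal.ofReal c₀)) (v : V) (n : ℕ) :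
    decayRate d c₀ * (n + 1) * (pairing w (lazyHeat w v n) (lazyHeat w v n)).toReal ^ (2 / d) ≤
      1 := by
  have hd0 : 0 < d := one_pos.trans_le hd
  refine mul_rpow_le_one_of_le_mul_one_sub
    (a := fun n => (pairing w (lazyHeat w v n) (lazyHeat w v n)).toReal)
    (fun _ => ENNReal.toReal_nonneg) (by positivity) (decayRate_pos hd0 hc₀).le le_rfl ?_
    (fun n => ?_) n
  swap
  · rw [lazyHeat_succ]
    exact hiso.toReal_pairing_lazyOp_le hd hc₀ h0 hfin hsymm
      (pairing_lazyHeat_one h0 hfin hsymm v n).le (pairing_lazyHeat_self_ne_top h0 hfin hsymm v n)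
  have hmass : c₀ ^ d ≤ (mass w v).toReal := by
    simpa only [← ENNReal.toReal_rpow, ENNReal.toReal_ofReal hc₀.le] using
      ENNReal.toReal_mono (hfin v) (hiso.rpow_le_mass hd (h0 v) (hfin v))
  have hrate : decayRate d c₀ ≤ c₀ ^ 2 := by
    have h4 : (1 : ℝ) ≤ 4 ^ (2 / d) := Real.one_le_rpow (by norm_num) (by positivity)
    have hd2 : 2 / d ≤ 2 := div_le_self zero_le_two hd
    calc decayRate d c₀ ≤ 2 * (c₀ ^ 2 / (16 * 1)) := by unfold decayRate; gcongr
      _ ≤ c₀ ^ 2 := by linarith [sq_nonneg c₀]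
  calc decayRate d c₀ * (pairing w (lazyHeat w v 0) (lazyHeat w v 0)).toReal ^ (2 / d)
      = decayRate d c₀ * ((mass w v).toReal⁻¹) ^ (2 / d) := by
        rw [pairing_lazyHeat_zero (h0 v) (hfin v), ENNReal.toReal_inv]
    _ ≤ c₀ ^ 2 * ((c₀ ^ d)⁻¹) ^ (2 / d) := by gcongr
    _ = 1 := by
        rw [Real.inv_rpow (by positivity), ← Real.rpow_mul hc₀.le, mul_div_cancel₀ _ hd0.ne',
          Real.rpow_two, mul_inv_cancel₀ (by positivity)]

theorem pairing_lazyHeat_self_le {d c₀ : ℝ} (hd : 1 ≤ d) (hc₀ : 0 < c₀)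
    (hiso : IsIsoperimetric w d (ENNReal.ofReal c₀)) (v : V) (n : ℕ) :
    pairing w (lazyHeat w v n) (lazyHeat w v n) ≤
      ENNReal.ofReal ((decayRate d c₀ * (n + 1)) ^ (-(d / 2))) := by
  have hρ : 0 < decayRate d c₀ * (n + 1) :=
    mul_pos (decayRate_pos (one_pos.trans_le hd) hc₀) n.cast_add_one_pos
  refine ENNReal.le_ofReal_iff_toReal_le (pairing_lazyHeat_self_ne_top h0 hfin hsymm v n)
    (by positivity) |>.2 ?_
  rw [← inv_div, Real.rpow_neg_eq_inv_rpow,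
    Real.le_rpow_inv_iff_of_pos ENNReal.toReal_nonneg (by positivity) (by positivity),
    ← mul_le_mul_iff_right₀ hρ, mul_inv_cancel₀ hρ.ne']
  exact decayRate_mul_toReal_pairing_lazyHeat_rpow_le_one h0 hfin hsymm hd hc₀ hiso v n

theorem lazyHeat_le {d c₀ : ℝ} (hd : 1 ≤ d) (hc₀ : 0 < c₀)
    (hiso : IsIsoperimetric w d (ENNReal.ofReal c₀)) (u v : V) (n : ℕ) :
    lazyHeat w v n u ≤ ENNReal.ofReal ((decayRate d c₀ / 2 * (n + 1)) ^ (-(d / 2))) := by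
  have hρ : 0 < decayRate d c₀ := decayRate_pos (one_pos.trans_le hd) hc₀
  have hdiag (x : V) {k : ℕ} (hk : n + 1 ≤ 2 * (k + 1)) :
      pairing w (lazyHeat w x k) (lazyHeat w x k) ≤
        ENNReal.ofReal ((decayRate d c₀ / 2 * (n + 1)) ^ (-(d / 2))) := by
    refine (pairing_lazyHeat_self_le h0 hfin hsymm hd hc₀ hiso x k).trans
      (ENNReal.ofReal_le_ofReal (Real.rpow_le_rpow_of_nonpos (by positivity) ?_ (by linarith)))
    have hk' : (n + 1 : ℝ) ≤ 2 * (k + 1) := by exact_mod_cast hk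
    calc decayRate d c₀ / 2 * (n + 1) ≤ decayRate d c₀ / 2 * (2 * (k + 1)) := by gcongr
      _ = decayRate d c₀ * (k + 1) := by ring
  rw [← ENNReal.pow_le_pow_left_iff two_ne_zero, sq (ENNReal.ofReal _)]
  calc lazyHeat w v n u ^ 2
      = pairing w (lazyHeat w u (n / 2)) (lazyHeat w v (n - n / 2)) ^ 2 := by
        rw [pairing_lazyHeat_lazyHeat h0 hfin hsymm, Nat.add_sub_cancel' (Nat.div_le_self n 2)]
    _ ≤ _ := sq_pairing_le w _ _
    _ ≤ _ := mul_le_mul' (hdiag u (by lia)) (hdiag v (by lia))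

theorem tsum_lazyHeat_add_le {d c₀ : ℝ} (hd : 2 < d) (hc₀ : 0 < c₀)
    (hiso : IsIsoperimetric w d (ENNReal.ofReal c₀)) (u v : V) {N : ℕ} (hN : 0 < N) :
    ∑' n, lazyHeat w v (n + N) u ≤
      ENNReal.ofReal (2 * greenConst d c₀ * (N : ℝ) ^ (-((d - 2) / 2))) := by
  have hρ : 0 < decayRate d c₀ / 2 := half_pos (decayRate_pos (two_pos.trans hd) hc₀)
  calc ∑' n, lazyHeat w v (n + N) u
      ≤ ∑' n : ℕ, ENNReal.ofReal ((decayRate d c₀ / 2) ^ (-(d / 2))) *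
          ENNReal.ofReal (((n + N : ℕ) + 1 : ℝ) ^ (-(d / 2))) := by
        refine ENNReal.tsum_le_tsum fun n => ?_
        rw [← ENNReal.ofReal_mul (by positivity), ← Real.mul_rpow hρ.le (by positivity)]
        exact lazyHeat_le h0 hfin hsymm (by linarith) hc₀ hiso u v (n + N)
    _ ≤ ENNReal.ofReal ((decayRate d c₀ / 2) ^ (-(d / 2))) *
          ENNReal.ofReal ((N : ℝ) ^ (1 - d / 2) / (d / 2 - 1)) := by
        rw [ENNReal.tsum_mul_left]
        gcongr
        exact tsum_ofReal_rpow_neg_le (by linarith) hN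
    _ = _ := by
        rw [← ENNReal.ofReal_mul (by positivity), greenConst,
          show 1 - d / 2 = -((d - 2) / 2) by ring, show d / 2 - 1 = (d - 2) / 2 by ring]
        congr 1
        field_simp

theorem tsum_lazyHeat_ne_top {d c₀ : ℝ} (hd : 2 < d) (hc₀ : 0 < c₀)
    (hiso : IsIsoperimetric w d (ENNReal.ofReal c₀)) (u v : V) :
    ∑' n, lazyHeat w v n u ≠ ∞ := by
  rw [tsum_eq_zero_add' ENNReal.summable]
  refine ENNReal.add_ne_top.2 ⟨ne_top_of_le_ne_top ENNReal.ofReal_ne_top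
    (lazyHeat_le h0 hfin hsymm (by linarith) hc₀ hiso u v 0), ne_top_of_le_ne_top
    ENNReal.ofReal_ne_top (tsum_lazyHeat_add_le h0 hfin hsymm hd hc₀ hiso u v one_pos)⟩

theorem tsum_iterate_markovOp_normalizedDirac_le {d c₀ : ℝ} (hd : 2 < d) (hc₀ : 0 < c₀)
    (hiso : IsIsoperimetric w d (ENNReal.ofReal c₀)) {G : SimpleGraph V}
    (hadj : ∀ x y, x ≠ y → w x y ≠ 0 → G.Adj x y) (hG : G.Connected) {u v : V} (huv : u ≠ v) :
    ∑' n, (markovOp w)^[n] (normalizedDirac w v) u ≤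
      ENNReal.ofReal (greenConst d c₀ * (G.dist u v : ℝ) ^ (-((d - 2) / 2))) := by
  have htail : ∑' n, lazyHeat w v n u = ∑' n, lazyHeat w v (n + G.dist u v) u := by
    rw [← ENNReal.summable.sum_add_tsum_nat_add' (k := G.dist u v), Finset.sum_eq_zero, zero_add]
    exact fun n hn => lazyHeat_eq_zero_of_lt_dist hadj hG (Finset.mem_range.1 hn)
  calc ∑' n, (markovOp w)^[n] (normalizedDirac w v) u
      ≤ 2⁻¹ * ∑' n, lazyHeat w v n u :=
        tsum_iterate_markovOp_le (fun x => tsum_lazyHeat_ne_top h0 hfin hsymm hd hc₀ hiso x v) u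
    _ ≤ 2⁻¹ * ENNReal.ofReal (2 * greenConst d c₀ * (G.dist u v : ℝ) ^ (-((d - 2) / 2))) := by
        rw [htail]
        gcongr
        exact tsum_lazyHeat_add_le h0 hfin hsymm hd hc₀ hiso u v (hG.pos_dist_of_ne huv)
    _ = _ := by
        rw [mul_assoc 2, ENNReal.ofReal_mul zero_le_two, ENNReal.ofReal_ofNat, ← mul_assoc,
          ENNReal.inv_mul_cancel two_ne_zero ENNReal.ofNat_ne_top, one_mul]

end HeatKernel

/-- The expansion profile `Φ` of real conductances, with `inf ∅ = ∞`. -/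
noncomputable def expansionProfile {V : Type*} [DecidableEq V] (c : V → V → ℝ) (u : ℝ) : ℝ≥0∞ :=
  sInf {t : ℝ≥0∞ | ∃ S : Finset V,
    0 < (∑ s ∈ S, ∑' y, c s y) ∧ (∑ s ∈ S, ∑' y, c s y) ≤ u ∧
    t = ENNReal.ofReal ((∑ s ∈ S, ∑' a, if a ∈ S then 0 else c s a) /
          (∑ s ∈ S, ∑' y, c s y))}

theorem kernelIter_nonneg {V : Type*} [DecidableEq V] {p : V → V → ℝ} (hp : ∀ x y, 0 ≤ p x y)
    (n : ℕ) (x y : V) : 0 ≤ kernelIter p n x y := by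
  induction n generalizing x with
  | zero => unfold kernelIter; positivity
  | succ n ih => exact tsum_nonneg fun z => mul_nonneg (hp x z) (ih z)

section RealConductances

variable {V : Type*} {c : V → V → ℝ} (hc : ∀ x y, 0 ≤ c x y) (hsum : ∀ x, Summable (c x))

include hc hsum

theorem mass_ofReal (x : V) : mass (fun x y => ENNReal.ofReal (c x y)) x =
    ENNReal.ofReal (∑' y, c x y) :=
  (ENNReal.ofReal_tsum_of_nonneg (hc x) (hsum x)).symm

variable [DecidableEq V]

theorem boundaryFlow_ofReal (S : Finset V) : boundaryFlow (fun x y => ENNReal.ofReal (c x y)) S =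
    ENNReal.ofReal (∑ x ∈ S, ∑' y, if y ∈ S then 0 else c x y) := by
  have hnonneg (x y : V) : 0 ≤ if y ∈ S then 0 else c x y := by
    split_ifs
    exacts [le_rfl, hc x y]
  have hsummable (x : V) : Summable fun y => if y ∈ S then 0 else c x y :=
    (hsum x).of_nonneg_of_le (hnonneg x) fun y => by
      split_ifs
      exacts [hc x y, le_rfl]
  rw [ENNReal.ofReal_sum_of_nonneg fun x _ => tsum_nonneg (hnonneg x)]
  refine Finset.sum_congr rfl fun x _ => ?_
  rw [ENNReal.ofReal_tsum_of_nonneg (hnonneg x) (hsummable x)]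
  exact tsum_congr fun y => by split_ifs <;> simp

theorem isIsoperimetric_of_le_expansionProfile {d c₀ : ℝ} (hd : 1 < d)
    (hΦ : ∀ u, 0 < u → ENNReal.ofReal (c₀ * u ^ (-(1 / d))) ≤ expansionProfile c u) :
    IsIsoperimetric (fun x y => ENNReal.ofReal (c x y)) d (ENNReal.ofReal c₀) := by
  intro S
  have hexp : 0 < 1 - 1 / d := sub_pos.2 ((div_lt_one (one_pos.trans hd)).2 hd)
  have hπ (x : V) : 0 ≤ ∑' y, c x y := tsum_nonneg (hc x)
  set m := ∑ x ∈ S, ∑' y, c x y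
  set q := ∑ x ∈ S, ∑' y, if y ∈ S then 0 else c x y
  have hmass : ∑ x ∈ S, mass (fun x y => ENNReal.ofReal (c x y)) x = ENNReal.ofReal m := by
    rw [ENNReal.ofReal_sum_of_nonneg fun x _ => hπ x]
    exact Finset.sum_congr rfl fun x _ => mass_ofReal hc hsum x
  rw [hmass, boundaryFlow_ofReal hc hsum]
  have hm0 : 0 ≤ m := Finset.sum_nonneg fun x _ => hπ x
  rcases hm0.eq_or_lt with hm | hm
  · rw [← hm, ENNReal.ofReal_zero, ENNReal.zero_rpow_of_pos hexp, mul_zero]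
    exact zero_le
  have hprofile : ENNReal.ofReal (c₀ * m ^ (-(1 / d))) ≤ ENNReal.ofReal (q / m) :=
    (hΦ m hm).trans (sInf_le ⟨S, hm, le_rfl, rfl⟩)
  calc ENNReal.ofReal c₀ * ENNReal.ofReal m ^ (1 - 1 / d)
      = ENNReal.ofReal (c₀ * m ^ (-(1 / d))) * ENNReal.ofReal m := by
        rw [ENNReal.ofReal_rpow_of_pos hm, ← ENNReal.ofReal_mul' (by positivity),
          ← ENNReal.ofReal_mul' hm.le, mul_assoc, ← Real.rpow_add_one hm.ne', neg_add_eq_sub]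
    _ ≤ ENNReal.ofReal (q / m) * ENNReal.ofReal m := by gcongr
    _ = ENNReal.ofReal q := by rw [← ENNReal.ofReal_mul' hm.le, div_mul_cancel₀ _ hm.ne']

theorem ofReal_kernelIter_le (hpos : ∀ x, 0 < ∑' y, c x y) (n : ℕ) (u v : V) :
    ENNReal.ofReal (kernelIter (fun x y => c x y / ∑' z, c x z) n u v) ≤
      ENNReal.ofReal (∑' y, c v y) *
        (markovOp fun x y => ENNReal.ofReal (c x y))^[n]
          (normalizedDirac (fun x y => ENNReal.ofReal (c x y)) v) u := by
  induction n generalizing u with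
  | zero =>
    rcases eq_or_ne u v with rfl | huv
    · simp [kernelIter, normalizedDirac, mass_ofReal hc hsum,
        ENNReal.mul_inv_cancel (ENNReal.ofReal_pos.2 (hpos u)).ne' ENNReal.ofReal_ne_top]
    · simp [kernelIter, huv]
  | succ n ih =>
    have hp (x y : V) : 0 ≤ c x y / ∑' z, c x z := div_nonneg (hc x y) (hpos x).le
    rw [Function.iterate_succ_apply', markovOp, mass_ofReal hc hsum, mul_left_comm,
      ← ENNReal.tsum_mul_left, ← ENNReal.tsum_mul_left]
    refine (ofReal_tsum_le fun z => mul_nonneg (hp u z) (kernelIter_nonneg hp n z v)).trans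
      (ENNReal.tsum_le_tsum fun z => ?_)
    rw [ENNReal.ofReal_mul (hp u z), ENNReal.ofReal_div_of_pos (hpos u), div_eq_mul_inv,
      mul_left_comm (ENNReal.ofReal (∑' y, c v y)), ← mul_assoc, mul_comm (ENNReal.ofReal (c u z))]
    gcongr
    exact ih z

end RealConductances

theorem stmt11_general {d c₀ : ℝ} (hd : 2 < d) (hc₀ : 0 < c₀) {V : Type*} [DecidableEq V]
    {G : SimpleGraph V} {c : V → V → ℝ} (hc : ∀ x y, 0 ≤ c x y) (hsymm : ∀ x y, c x y = c y x)
    (hsum : ∀ x, Summable (c x)) (hpos : ∀ x, 0 < ∑' y, c x y)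
    (hadj : ∀ x y, x ≠ y → 0 < c x y → G.Adj x y) (hG : G.Connected)
    (hΦ : ∀ u, 0 < u → ENNReal.ofReal (c₀ * u ^ (-(1 / d))) ≤ expansionProfile c u)
    {u v : V} (huv : u ≠ v) :
    Summable (fun n => kernelIter (fun x y => c x y / ∑' z, c x z) n u v) ∧
      (∑' n, kernelIter (fun x y => c x y / ∑' z, c x z) n u v) / (∑' y, c v y) ≤
        greenConst d c₀ * (G.dist u v : ℝ) ^ (-((d - 2) / 2)) := by
  have hmass (x : V) := mass_ofReal hc hsum x
  have hgreen := tsum_iterate_markovOp_normalizedDirac_le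
    (fun x => (hmass x).trans_ne (ENNReal.ofReal_pos.2 (hpos x)).ne')
    (fun x => (hmass x).trans_ne ENNReal.ofReal_ne_top) (fun x y => by rw [hsymm]) hd hc₀
    (isIsoperimetric_of_le_expansionProfile hc hsum (one_lt_two.trans hd) hΦ)
    (fun x y hxy hw => hadj x y hxy (ENNReal.ofReal_pos.1 (pos_iff_ne_zero.2 hw))) hG huv
  have hbound : 0 ≤ greenConst d c₀ * (G.dist u v : ℝ) ^ (-((d - 2) / 2)) :=
    mul_nonneg (greenConst_pos hd hc₀).le (by positivity)
  rw [div_le_iff₀' (hpos v)]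
  refine summable_and_tsum_le_of_tsum_ofReal_le
    (fun n => kernelIter_nonneg (fun x y => div_nonneg (hc x y) (hpos x).le) n u v)
    (mul_nonneg (hpos v).le hbound) ?_
  rw [ENNReal.ofReal_mul (hpos v).le]
  refine (ENNReal.tsum_le_tsum fun n => ofReal_kernelIter_le hc hsum hpos n u v).trans ?_
  rw [ENNReal.tsum_mul_left]
  gcongr

/-- For every `d > 2` and `c₀ > 0` there is a constant `C = C(d, c₀) > 0` such that for any
connected reversible network on a countable vertex set with conductances `c`, stationary
measure `π(x) = ∑_y c(x,y) ∈ (0,∞)`, and expansion profile satisfying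
`Φ(u) ≥ c₀ u^{−1/d}` for all `u > 0`, the Green's function of the walk `p(x,y) = c(x,y)/π(x)`
satisfies `G(u,v)/π(v) ≤ C · dist(u,v)^{−(d−2)/2}` for all `u ≠ v`. -/
theorem stmt11 (d c₀ : ℝ) (hd : 2 < d) (hc₀ : 0 < c₀) :
    ∃ C : ℝ, 0 < C ∧
      ∀ (V : Type) [Countable V] [DecidableEq V] (G : SimpleGraph V) (c : V → V → ℝ),
        (∀ x y, 0 ≤ c x y) → (∀ x y, c x y = c y x) → (∀ x, c x x = 0) →
        (∀ x, Summable (fun y => c x y)) → (∀ x, 0 < ∑' y, c x y) →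
        (∀ x y, G.Adj x y ↔ 0 < c x y) → G.Connected →
        (∀ u : ℝ, 0 < u →
          ENNReal.ofReal (c₀ * u ^ (-(1 / d))) ≤
            sInf {t : ℝ≥0∞ | ∃ S : Finset V,
              0 < (∑ s ∈ S, ∑' y, c s y) ∧ (∑ s ∈ S, ∑' y, c s y) ≤ u ∧
              t = ENNReal.ofReal ((∑ s ∈ S, ∑' a, if a ∈ S then 0 else c s a) /
                    (∑ s ∈ S, ∑' y, c s y))}) →
        ∀ u v : V, u ≠ v →
          Summable (fun n => kernelIter (fun x y => c x y / ∑' z, c x z) n u v) ∧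
          (∑' n, kernelIter (fun x y => c x y / ∑' z, c x z) n u v) / (∑' y, c v y)
            ≤ C * (G.dist u v : ℝ) ^ (-((d - 2) / 2)) := by
  exact ⟨greenConst d c₀, greenConst_pos hd hc₀,
    fun V _ _ G c hc hsymm _ hsum hpos hadj hG hΦ u v huv =>
      stmt11_general hd hc₀ hc hsymm hsum hpos (fun x y _ => (hadj x y).2) hG hΦ huv⟩
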